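/- In any nondegenerate triangle, the distance from the incenter X1 to the circumcenter X3 satisfies dist(X1, X3) ≥ (3/2 + √2)·dist(X1, X7), where X7 is the Gergonne point. -/

import Mathlib

/-- The point with normalized barycentric coordinates `(x : y : z)`
with respect to the triangle `A B C`. -/
noncomputable def bary (A B C : EuclideanSpace ℝ (Fin 2)) (x y z : ℝ) :
    EuclideanSpace ℝ (Fin 2) :=
  (x + y + z)⁻¹ • (x • A + y • B + z • C)

/-- The triangle center with barycentric coordinates
`(f a b c : f b c a : f c a b)` where `a, b, c` are the side lengths. -/
noncomputable def tcenter (f : ℝ → ℝ → ℝ → ℝ) (A B C : EuclideanSpace ℝ (Fin 2)) :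
    EuclideanSpace ℝ (Fin 2) :=
  bary A B C (f (dist B C) (dist C A) (dist A B))
    (f (dist C A) (dist A B) (dist B C))
    (f (dist A B) (dist B C) (dist C A))

/-!
Let `R`, `r`, `s` be the circumradius, inradius and semiperimeter, and put `d = dist X1 X3`,
`e = dist X1 X7`. Euler's formula `d² = R (R - 2r)` turns the lower half of Blundon's inequality
into `s² ≥ 2R² + 10Rr - r² - 2(R - 2r)d`. Inserted in `e² = r² (1 - 3s² / (4R + r)²)`, this bound
factors completely and becomes `e (3R - d) ≤ 2rd`. Finally, with `κ = 3/2 + √2` we have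
`2κr ≤ 3R - d`, because `2Rr = R² - d²` and the quadratic form `R (3R - d) - κ (R² - d²)` in `R`
and `d` has discriminant zero.
-/

section Barycentric

/-- The point with normalized barycentric coordinates `(x : y : z)` with respect to the points
`A`, `B`, `C` of a real vector space; it extends `bary` beyond the plane. If `x + y + z = 0`, it
is the junk value `0`. -/
noncomputable def barycentricPoint {V : Type*} [AddCommGroup V] [Module ℝ V] (A B C : V)
    (x y z : ℝ) : V :=
  (x + y + z)⁻¹ • (x • A + y • B + z • C)

/-- The triangle center with weight function `f` of a triangle in a real normed space; it extends
`tcenter` beyond the plane. -/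
noncomputable def triangleCenter {V : Type*} [NormedAddCommGroup V] [NormedSpace ℝ V]
    (f : ℝ → ℝ → ℝ → ℝ) (A B C : V) : V :=
  barycentricPoint A B C (f (dist B C) (dist C A) (dist A B))
    (f (dist C A) (dist A B) (dist B C)) (f (dist A B) (dist B C) (dist C A))

variable {V : Type*} [NormedAddCommGroup V] [InnerProductSpace ℝ V]

theorem norm_sq_smul_add_smul_add_smul_of_sum_eq_zero (A B C : V) {u v w : ℝ}
    (h : u + v + w = 0) :
    ‖u • A + v • B + w • C‖ ^ 2 =
      -(v * w * dist B C ^ 2 + w * u * dist C A ^ 2 + u * v * dist A B ^ 2) := by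
  have hsum : ∑ i, ![u, v, w] i = 0 := by simpa [Fin.sum_univ_three] using h
  have hinner := EuclideanGeometry.inner_weightedVSub ![A, B, C] hsum ![A, B, C] hsum
  rw [Finset.weightedVSub_eq_linear_combination _ hsum, real_inner_self_eq_norm_sq] at hinner
  simp only [Fin.sum_univ_three, Matrix.cons_val, dist_self] at hinner
  rw [hinner, dist_comm B A, dist_comm C B, dist_comm A C]
  ring

theorem dist_barycentricPoint_sq (A B C : V) {x y z x' y' z' : ℝ}
    (h : x + y + z ≠ 0) (h' : x' + y' + z' ≠ 0) :
    dist (barycentricPoint A B C x y z) (barycentricPoint A B C x' y' z') ^ 2 =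
      -((y / (x + y + z) - y' / (x' + y' + z')) * (z / (x + y + z) - z' / (x' + y' + z'))
            * dist B C ^ 2
        + (z / (x + y + z) - z' / (x' + y' + z')) * (x / (x + y + z) - x' / (x' + y' + z'))
            * dist C A ^ 2
        + (x / (x + y + z) - x' / (x' + y' + z')) * (y / (x + y + z) - y' / (x' + y' + z'))
            * dist A B ^ 2) := by
  rw [dist_eq_norm, ← norm_sq_smul_add_smul_add_smul_of_sum_eq_zero]
  · congr 2
    simp only [barycentricPoint]
    module
  · field_simp
    ring

end Barycentric

section TangentLengths

variable {x y z : ℝ}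

/-- The positive numbers `x`, `y`, `z` are the tangent lengths of the triangle `A B C`, that is,
the distances from `A`, `B`, `C` to the points where the incircle touches the adjacent sides. -/
structure IsTangentLengths {P : Type*} [MetricSpace P] (A B C : P) (x y z : ℝ) : Prop where
  pos_x : 0 < x
  pos_y : 0 < y
  pos_z : 0 < z
  dist_BC : dist B C = y + z
  dist_CA : dist C A = z + x
  dist_AB : dist A B = x + y

theorem exists_isTangentLengths {V P : Type*} [NormedAddCommGroup V] [NormedSpace ℝ V]
    [StrictConvexSpace ℝ V] [MetricSpace P] [NormedAddTorsor V P] {A B C : P}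
    (h : AffineIndependent ℝ ![A, B, C]) :
    ∃ x y z, IsTangentLengths A B C x y z := by
  have hA : dist B C < dist B A + dist A C :=
    dist_lt_dist_add_dist_iff.2 (h.not_wbtw_of_injective 1 0 2 (by decide))
  have hB : dist C A < dist C B + dist B A :=
    dist_lt_dist_add_dist_iff.2 (h.not_wbtw_of_injective 2 1 0 (by decide))
  have hC : dist A B < dist A C + dist C B :=
    dist_lt_dist_add_dist_iff.2 (h.not_wbtw_of_injective 0 2 1 (by decide))
  rw [dist_comm B A, dist_comm A C] at hA
  rw [dist_comm C B, dist_comm B A] at hB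
  rw [dist_comm A C, dist_comm C B] at hC
  exact ⟨(dist C A + dist A B - dist B C) / 2, (dist A B + dist B C - dist C A) / 2,
    (dist B C + dist C A - dist A B) / 2, by constructor <;> linarith⟩

/-- The inradius of the triangle with tangent lengths `x`, `y`, `z`, whose semiperimeter is
`x + y + z`, by Heron's formula. -/
noncomputable def inradius (x y z : ℝ) : ℝ :=
  √(x * y * z / (x + y + z))

/-- The circumradius of the triangle with tangent lengths `x`, `y`, `z`, as the product of the
sides divided by four times the area. -/
noncomputable def circumradius (x y z : ℝ) : ℝ :=
  (x + y) * (y + z) * (z + x) / (4 * inradius x y z * (x + y + z))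

theorem inradius_pos (hx : 0 < x) (hy : 0 < y) (hz : 0 < z) : 0 < inradius x y z :=
  Real.sqrt_pos.2 (by positivity)

theorem circumradius_pos (hx : 0 < x) (hy : 0 < y) (hz : 0 < z) : 0 < circumradius x y z := by
  have := inradius_pos hx hy hz
  unfold circumradius
  positivity

theorem inradius_sq (hx : 0 < x) (hy : 0 < y) (hz : 0 < z) :
    inradius x y z ^ 2 = x * y * z / (x + y + z) :=
  Real.sq_sqrt (by positivity)

theorem circumradius_mul_inradius (hx : 0 < x) (hy : 0 < y) (hz : 0 < z) :
    circumradius x y z * inradius x y z = (x + y) * (y + z) * (z + x) / (4 * (x + y + z)) := by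
  have := inradius_pos hx hy hz
  unfold circumradius
  field_simp

theorem circumradius_sq (hx : 0 < x) (hy : 0 < y) (hz : 0 < z) :
    circumradius x y z ^ 2 =
      ((x + y) * (y + z) * (z + x)) ^ 2 / (16 * (x * y * z) * (x + y + z)) := by
  have hsq : (4 * inradius x y z * (x + y + z)) ^ 2 = 16 * (x * y * z) * (x + y + z) := by
    rw [mul_pow, mul_pow, inradius_sq hx hy hz]
    field_simp
    norm_num
  rw [circumradius, div_pow, hsq]

theorem four_mul_circumradius_add_inradius (hx : 0 < x) (hy : 0 < y) (hz : 0 < z) :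
    4 * circumradius x y z + inradius x y z = (x * y + y * z + z * x) / inradius x y z := by
  have := inradius_pos hx hy hz
  rw [eq_div_iff this.ne', add_mul, mul_assoc, circumradius_mul_inradius hx hy hz, ← sq,
    inradius_sq hx hy hz]
  field_simp
  ring

theorem blundon_inequality (hx : 0 < x) (hy : 0 < y) (hz : 0 < z) :
    ((x + y + z) ^ 2 - 2 * circumradius x y z ^ 2 - 10 * (circumradius x y z * inradius x y z)
        + inradius x y z ^ 2) ^ 2 ≤
      4 * circumradius x y z * (circumradius x y z - 2 * inradius x y z) ^ 3 := by
  set R := circumradius x y z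
  set r := inradius x y z
  have hdiff : 4 * R * (R - 2 * r) ^ 3 -
      ((x + y + z) ^ 2 - 2 * R ^ 2 - 10 * (R * r) + r ^ 2) ^ 2 =
      (x + y + z) * ((x - y) * (y - z) * (z - x)) ^ 2 / (4 * (x * y * z)) := by
    have hexpand : 4 * R * (R - 2 * r) ^ 3 = 4 * (R ^ 2) ^ 2 - 24 * R ^ 2 * (R * r)
        + 48 * (R * r) ^ 2 - 32 * (R * r) * r ^ 2 := by ring
    rw [hexpand, circumradius_sq hx hy hz, circumradius_mul_inradius hx hy hz,
      inradius_sq hx hy hz]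
    field_simp
    ring
  rw [← sub_nonneg, hdiff]
  positivity

variable {V : Type*} [NormedAddCommGroup V] [InnerProductSpace ℝ V] {A B C : V}

theorem IsTangentLengths.dist_incenter_circumcenter_sq (h : IsTangentLengths A B C x y z) :
    dist (triangleCenter (fun a _ _ ↦ a) A B C)
        (triangleCenter (fun a b c ↦ a ^ 2 * (a ^ 2 - b ^ 2 - c ^ 2)) A B C) ^ 2 =
      circumradius x y z * (circumradius x y z - 2 * inradius x y z) := by
  obtain ⟨hx, hy, hz, hBC, hCA, hAB⟩ := h
  have hexpand : circumradius x y z * (circumradius x y z - 2 * inradius x y z) =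
      circumradius x y z ^ 2 - 2 * (circumradius x y z * inradius x y z) := by ring
  have hsum₁ : y + z + (z + x) + (x + y) = 2 * (x + y + z) := by ring
  have hsum₃ : (y + z) ^ 2 * ((y + z) ^ 2 - (z + x) ^ 2 - (x + y) ^ 2)
      + (z + x) ^ 2 * ((z + x) ^ 2 - (x + y) ^ 2 - (y + z) ^ 2)
      + (x + y) ^ 2 * ((x + y) ^ 2 - (y + z) ^ 2 - (z + x) ^ 2)
      = -(16 * (x * y * z) * (x + y + z)) := by ring
  simp only [triangleCenter, hBC, hCA, hAB]
  rw [dist_barycentricPoint_sq A B C (by positivity)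
    (by rw [hsum₃]; exact neg_ne_zero.2 (by positivity)), hsum₁, hsum₃, hBC, hCA, hAB, hexpand,
    circumradius_sq hx hy hz, circumradius_mul_inradius hx hy hz]
  simp only [div_neg]
  field_simp
  ring

theorem IsTangentLengths.dist_incenter_gergonne_sq (h : IsTangentLengths A B C x y z) :
    dist (triangleCenter (fun a _ _ ↦ a) A B C)
        (triangleCenter (fun a b c ↦ (a + b - c) * (a - b + c)) A B C) ^ 2 =
      inradius x y z ^ 2 *
        (1 - 3 * (x + y + z) ^ 2 / (4 * circumradius x y z + inradius x y z) ^ 2) := by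
  obtain ⟨hx, hy, hz, hBC, hCA, hAB⟩ := h
  have hsum₁ : y + z + (z + x) + (x + y) = 2 * (x + y + z) := by ring
  have hsum₇ : (y + z + (z + x) - (x + y)) * (y + z - (z + x) + (x + y))
      + (z + x + (x + y) - (y + z)) * (z + x - (x + y) + (y + z))
      + (x + y + (y + z) - (z + x)) * (x + y - (y + z) + (z + x))
      = 4 * (x * y + y * z + z * x) := by ring
  simp only [triangleCenter, hBC, hCA, hAB]
  rw [dist_barycentricPoint_sq A B C (by positivity) (by rw [hsum₇]; positivity), hsum₁, hsum₇,
    hBC, hCA, hAB, four_mul_circumradius_add_inradius hx hy hz, div_pow, inradius_sq hx hy hz]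
  field_simp
  ring

end TangentLengths

section MetricInequality

variable {R r s d e : ℝ}

theorem two_mul_mul_inradius_le (hR : 0 < R) (hd : d ^ 2 = R * (R - 2 * r)) :
    2 * ((3 / 2 + √2) * r) ≤ 3 * R - d := by
  set κ : ℝ := 3 / 2 + √2 with hκ_def
  have : 0 < κ := by positivity
  have hκ_root : 4 * κ ^ 2 = 12 * κ - 1 := by
    rw [hκ_def]
    linear_combination 4 * Real.sq_sqrt (zero_le_two (α := ℝ))
  have hsquare : 4 * κ * R * (3 * R - d - 2 * (κ * r)) = (2 * κ * d - R) ^ 2 := by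
    linear_combination (-4 * κ ^ 2) * hd - R ^ 2 * hκ_root
  have hnonneg : 0 ≤ 4 * κ * R * (3 * R - d - 2 * (κ * r)) := hsquare ▸ sq_nonneg _
  linarith [nonneg_of_mul_nonneg_right hnonneg (by positivity)]

theorem le_semiperimeter_sq_of_blundon (hR : 0 < R) (hd_nonneg : 0 ≤ d)
    (hd : d ^ 2 = R * (R - 2 * r))
    (hblundon : (s ^ 2 - 2 * R ^ 2 - 10 * (R * r) + r ^ 2) ^ 2 ≤ 4 * R * (R - 2 * r) ^ 3) :
    2 * R ^ 2 + 10 * (R * r) - r ^ 2 - 2 * (R - 2 * r) * d ≤ s ^ 2 := by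
  have hRr : 0 ≤ R - 2 * r := nonneg_of_mul_nonneg_right (hd ▸ sq_nonneg d) hR
  have hsquare : 4 * R * (R - 2 * r) ^ 3 = (2 * (R - 2 * r) * d) ^ 2 := by
    rw [mul_pow, hd]
    ring
  rw [hsquare] at hblundon
  linarith [neg_le_of_abs_le (abs_le_of_sq_le_sq hblundon (by positivity))]

theorem gergonne_dist_mul_le (hR : 0 < R) (hr : 0 < r) (hd_nonneg : 0 ≤ d)
    (hd : d ^ 2 = R * (R - 2 * r)) (he : e ^ 2 = r ^ 2 * (1 - 3 * s ^ 2 / (4 * R + r) ^ 2))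
    (hs : 2 * R ^ 2 + 10 * (R * r) - r ^ 2 - 2 * (R - 2 * r) * d ≤ s ^ 2) :
    e * (3 * R - d) ≤ 2 * r * d := by
  have he' : (e * (4 * R + r)) ^ 2 = r ^ 2 * ((4 * R + r) ^ 2 - 3 * s ^ 2) := by
    rw [mul_pow, he]
    field_simp
  have hfactor : 2 * R * (4 * R + r) = (3 * R + d) * (3 * R - d) := by
    linear_combination hd
  have hsq : (e * (4 * R + r) * R) ^ 2 ≤ (r * d * (3 * R + d)) ^ 2 := calc
    (e * (4 * R + r) * R) ^ 2 = r ^ 2 * ((4 * R + r) ^ 2 - 3 * s ^ 2) * R ^ 2 := by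
      rw [mul_pow, he']
    _ ≤ r ^ 2 * ((R - 2 * r) * (10 * R - 2 * r + 6 * d)) * R ^ 2 := by
      gcongr
      linarith
    _ = r ^ 2 * (R * (R - 2 * r)) * (9 * R ^ 2 + 6 * R * d + R * (R - 2 * r)) := by ring
    _ = (r * d * (3 * R + d)) ^ 2 := by
      rw [← hd]
      ring
  have hle : e * (4 * R + r) * R ≤ r * d * (3 * R + d) := le_of_sq_le_sq hsq (by positivity)
  refine le_of_mul_le_mul_left ?_ (show 0 < 3 * R + d by positivity)
  linear_combination 2 * hle - e * hfactor

theorem mul_gergonne_dist_le (hR : 0 < R) (hr : 0 < r) (hd_nonneg : 0 ≤ d)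
    (hd : d ^ 2 = R * (R - 2 * r)) (he : e ^ 2 = r ^ 2 * (1 - 3 * s ^ 2 / (4 * R + r) ^ 2))
    (hblundon : (s ^ 2 - 2 * R ^ 2 - 10 * (R * r) + r ^ 2) ^ 2 ≤ 4 * R * (R - 2 * r) ^ 3) :
    (3 / 2 + √2) * e ≤ d := by
  have hconst := two_mul_mul_inradius_le hR hd
  have hgergonne := gergonne_dist_mul_le hR hr hd_nonneg hd he
    (le_semiperimeter_sq_of_blundon hR hd_nonneg hd hblundon)
  have hpos : 0 < 3 * R - d := lt_of_lt_of_le (by positivity) hconst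
  refine le_of_mul_le_mul_right ?_ hpos
  calc (3 / 2 + √2) * e * (3 * R - d) = (3 / 2 + √2) * (e * (3 * R - d)) := mul_assoc ..
    _ ≤ (3 / 2 + √2) * (2 * r * d) := by gcongr
    _ = 2 * ((3 / 2 + √2) * r) * d := by ring
    _ ≤ (3 * R - d) * d := by gcongr
    _ = d * (3 * R - d) := mul_comm ..

end MetricInequality

theorem stmt_9_general {V : Type*} [NormedAddCommGroup V] [InnerProductSpace ℝ V] (A B C : V)
    (h : AffineIndependent ℝ ![A, B, C]) :
    dist (triangleCenter (fun a _ _ ↦ a) A B C)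
        (triangleCenter (fun a b c ↦ a ^ 2 * (a ^ 2 - b ^ 2 - c ^ 2)) A B C) ≥
      (3 / 2 + √2) * dist (triangleCenter (fun a _ _ ↦ a) A B C)
        (triangleCenter (fun a b c ↦ (a + b - c) * (a - b + c)) A B C) := by
  obtain ⟨x, y, z, hxyz⟩ := exists_isTangentLengths h
  have ⟨hx, hy, hz, _, _, _⟩ := hxyz
  exact mul_gergonne_dist_le (circumradius_pos hx hy hz) (inradius_pos hx hy hz) dist_nonneg
    hxyz.dist_incenter_circumcenter_sq hxyz.dist_incenter_gergonne_sq
    (blundon_inequality hx hy hz)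

theorem stmt_9 (A B C : EuclideanSpace ℝ (Fin 2))
    (h : AffineIndependent ℝ ![A, B, C]) :
    dist (tcenter (fun a b c => a) A B C) (tcenter (fun a b c => a^2*(a^2 - b^2 - c^2)) A B C) ≥ (3/2 + Real.sqrt 2) * dist (tcenter (fun a b c => a) A B C) (tcenter (fun a b c => (a + b - c)*(a - b + c)) A B C) :=
  stmt_9_general A B C h
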